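/- Let $G$ be a finite group, $p$ a prime with $m_p(H) \ge 2$, and $H$ a strongly $p$-embedded subgroup of $G$ with $O_{p'}(H) = 1$. Then $F^*(G)$ is a non-abelian simple group. -/

import Mathlib

def conjSub {G : Type*} [Group G] (g : G) (H : Subgroup G) : Subgroup G :=
  Subgroup.map (MulAut.conj g).toMonoidHom H

def IsStronglyPEmbedded {G : Type*} [Group G] (p : ℕ) (H : Subgroup G) : Prop :=
  H ≠ ⊤ ∧ (p ∣ Nat.card H) ∧ ∀ g : G, g ∉ H → ¬ (p ∣ Nat.card ↥(H ⊓ conjSub g H))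

def pPrimeCore (p : ℕ) (G : Type*) [Group G] : Subgroup G :=
  sSup {N : Subgroup G | N.Normal ∧ ¬ (p ∣ Nat.card N)}


/-- The Fitting subgroup: the largest normal nilpotent subgroup. -/
def fittingSubgroup (G : Type*) [Group G] : Subgroup G :=
  sSup {N : Subgroup G | N.Normal ∧ Group.IsNilpotent N}

/-- A subnormal subgroup: there is a chain `K ⊴ ⋯ ⊴ G`. -/
def IsSubnormal {G : Type*} [Group G] (K : Subgroup G) : Prop :=
  Relation.ReflTransGen
    (fun A B : Subgroup G => A ≤ B ∧ ∀ b ∈ B, ∀ a ∈ A, b * a * b⁻¹ ∈ A) K ⊤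

/-- A quasisimple subgroup: perfect and simple modulo its centre. -/
def IsQuasisimple {G : Type*} [Group G] (L : Subgroup G) : Prop :=
  commutator ↥L = ⊤ ∧ IsSimpleGroup (↥L ⧸ Subgroup.center ↥L)

/-- A component of `G`: a subnormal quasisimple subgroup. -/
def IsComponent {G : Type*} [Group G] (L : Subgroup G) : Prop :=
  IsSubnormal L ∧ IsQuasisimple L

/-- `E(G)`, the layer of `G`: the subgroup generated by the components. -/
def layerSub (G : Type*) [Group G] : Subgroup G :=
  sSup {L : Subgroup G | IsComponent L}

/-- `F^*(G) = F(G) E(G)`, the generalized Fitting subgroup. -/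
def genFitting (G : Type*) [Group G] : Subgroup G :=
  fittingSubgroup G ⊔ layerSub G

/-- `m_p(H) ≥ 2` : `H` contains an elementary abelian subgroup of order `p ^ 2`. -/
def HasElemAbelianRankTwo {G : Type*} [Group G] (p : ℕ) (H : Subgroup G) : Prop :=
  ∃ A : Subgroup G, A ≤ H ∧ Nat.card A = p ^ 2 ∧ ∀ a ∈ A, a ^ p = 1

/-!
A group `A` of order `p ^ 2` and exponent `p` cannot act on a nontrivial finite abelian group `W`
so that each nontrivial element fixes only `1`: the product of an orbit over a nontrivial subgroup
is then `1`, and `A \ {1}` is partitioned by the `p + 1` subgroups of order `p`, so multiplying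
over these gives `w ^ (p + 1) = w`, whereas `p` is prime to `|W|`. If `A ≤ H` normalizes `K` and
`[K, K] ≤ H`, strong embedding makes `A` act in this way on `K / (H ∩ K)`, so `K ≤ H`. Induction
on the derived subgroup then yields `K ≤ H` for `K` solvable, and hence, by choosing `A`-invariant
Sylow subgroups, for every `p'`-group `K`. In particular `O_{p'}(G) ≤ O_{p'}(H) = 1`.

Consequently every nontrivial normal subgroup of `G` has order divisible by `p`, so it meets `H`
in a subgroup of order divisible by `p` without being contained in `H`. Strong embedding makes its
centralizer trivial, so any two nontrivial normal subgroups meet nontrivially and the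
intersection `N` of all of them is nontrivial. As `H ∩ N` is strongly embedded in `N`, the same
holds for the normal subgroups of `N`, and their intersection, being characteristic, is `N`
itself: `N` is simple. Since `C_G(N) = 1`, `F^*(G) = N`.
-/

section PrimeOrderSubgroups

theorem card_eq_prime_and_mem_iff_eq_zpowers {A : Type*} [Group A] [Finite A] {p : ℕ} {a : A}
    (ha : orderOf a = p) {B : Subgroup A} : Nat.card B = p ∧ a ∈ B ↔ B = Subgroup.zpowers a := by
  refine ⟨fun ⟨hB, haB⟩ ↦ ?_, ?_⟩
  · refine (Subgroup.eq_of_le_of_card_ge (Subgroup.zpowers_le.2 haB) ?_).symm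
    rw [hB, Nat.card_zpowers, ha]
  · rintro rfl
    exact ⟨(Nat.card_zpowers a).trans ha, Subgroup.mem_zpowers a⟩

/-- The subgroups of `A` of order `p`. -/
noncomputable def subgroupsOfCard (p : ℕ) (A : Type*) [Group A] [Finite A] :
    Finset (Subgroup A) :=
  {B : Subgroup A | Nat.card B = p}.toFinite.toFinset

theorem mem_subgroupsOfCard {p : ℕ} {A : Type*} [Group A] [Finite A] {B : Subgroup A} :
    B ∈ subgroupsOfCard p A ↔ Nat.card B = p :=
  Set.Finite.mem_toFinset _

variable {A : Type*} [Group A] {p : ℕ} [Fact p.Prime]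

open Classical in
theorem prod_subgroupsOfCard_mul [Fintype A] (hA : ∀ a : A, a ^ p = 1)
    {M : Type*} [CommMonoid M] (f : A → M) :
    (∏ B ∈ subgroupsOfCard p A, ∏ b : B, f b) * f 1 =
      f 1 ^ (subgroupsOfCard p A).card * ∏ a, f a := by
  have prod_subgroup (B : Subgroup A) :
      ∏ b : B, f b = f 1 * ∏ a ∈ Finset.univ.erase 1, if a ∈ B then f a else 1 := by
    rw [← Finset.prod_subtype {a | a ∈ B} (fun _ ↦ Finset.mem_filter_univ _), Finset.prod_filter,
      ← Finset.mul_prod_erase _ _ (Finset.mem_univ 1), if_pos B.one_mem]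
  have prod_containing {a : A} (ha : a ∈ Finset.univ.erase 1) :
      ∏ B ∈ subgroupsOfCard p A, (if a ∈ B then f a else 1) = f a := by
    have hop := orderOf_eq_prime (hA a) (Finset.ne_of_mem_erase ha)
    rw [← Finset.prod_filter, Finset.prod_const,
      show (subgroupsOfCard p A).filter (a ∈ ·) = {Subgroup.zpowers a} by
        ext B
        rw [Finset.mem_filter, mem_subgroupsOfCard, card_eq_prime_and_mem_iff_eq_zpowers hop,
          Finset.mem_singleton],
      Finset.card_singleton, pow_one]
  rw [Finset.prod_congr rfl fun B _ ↦ prod_subgroup B, Finset.prod_mul_distrib, Finset.prod_const,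
    Finset.prod_comm, Finset.prod_congr rfl fun a ↦ prod_containing, mul_assoc,
    Finset.prod_erase_mul _ _ (Finset.mem_univ 1)]

theorem card_subgroupsOfCard [Finite A] (hcard : Nat.card A = p ^ 2) (hA : ∀ a : A, a ^ p = 1) :
    (subgroupsOfCard p A).card = p + 1 := by
  classical
  have := Fintype.ofFinite A
  have hp : 1 < p := (Fact.out : p.Prime).one_lt
  have count := prod_subgroupsOfCard_mul hA fun _ ↦ 2
  have prod_subgroup : ∀ B ∈ subgroupsOfCard p A, ∏ _ : B, 2 = 2 ^ p := fun B hB ↦ by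
    rw [Finset.prod_const, Finset.card_univ, ← Nat.card_eq_fintype_card, mem_subgroupsOfCard.1 hB]
  rw [Finset.prod_congr rfl prod_subgroup, Finset.prod_const, Finset.prod_const, Finset.card_univ,
    ← Nat.card_eq_fintype_card, hcard, ← pow_mul, ← pow_succ, ← pow_add] at count
  have count_exponents := Nat.pow_right_injective le_rfl count
  have : (p - 1) * (subgroupsOfCard p A).card = (p - 1) * (p + 1) := by
    zify [hp.le] at count_exponents ⊢
    linear_combination count_exponents
  exact Nat.eq_of_mul_eq_mul_left (Nat.sub_pos_of_lt hp) this

end PrimeOrderSubgroups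

section FixedPointFree

variable {A W : Type*} [Group A]

theorem prod_smul_eq_one_of_fixedPointFree [Fintype A] [CommMonoid W] [MulDistribMulAction A W]
    {a : A} (ha : ∀ w : W, a • w = w → w = 1) (w : W) : ∏ b : A, b • w = 1 := by
  apply ha
  simp only [Finset.smul_prod', smul_smul]
  exact Fintype.prod_equiv (Equiv.mulLeft a) _ _ fun _ ↦ rfl

variable {p : ℕ} [Fact p.Prime]

theorem not_dvd_card_of_fixedPointFree [Group W] [Finite W] [MulDistribMulAction A W]
    (hA : IsPGroup p A) {a : A} (ha : ∀ w : W, a • w = w → w = 1) : ¬ p ∣ Nat.card W := by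
  intro hdvd
  obtain ⟨w, hw, hne⟩ := hA.exists_fixed_point_of_prime_dvd_card_of_fixed_point W hdvd
    (a := 1) smul_one
  exact hne (ha w (hw a)).symm

variable [Finite A] [CommGroup W] [MulDistribMulAction A W]

open Classical in
theorem pow_eq_one_of_fixedPointFree (hcard : Nat.card A = p ^ 2) (hA : ∀ a : A, a ^ p = 1)
    (hfree : ∀ a : A, a ≠ 1 → ∀ w : W, a • w = w → w = 1) (w : W) : w ^ p = 1 := by
  have := Fintype.ofFinite A
  have hp : 1 < p := (Fact.out : p.Prime).one_lt
  have prod_subgroup (B : Subgroup A) (hB : 1 < Nat.card B) : ∏ b : B, (b : A) • w = 1 := by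
    have := Finite.one_lt_card_iff_nontrivial.1 hB
    obtain ⟨b, hb⟩ := exists_ne (1 : B)
    exact prod_smul_eq_one_of_fixedPointFree (A := B) (hfree b fun h ↦ hb (Subtype.ext h)) w
  have prod_univ : ∏ a : A, a • w = 1 := by
    have := Finite.one_lt_card_iff_nontrivial.1 (hcard ▸ Nat.one_lt_pow two_ne_zero hp)
    obtain ⟨a, ha⟩ := exists_ne (1 : A)
    exact prod_smul_eq_one_of_fixedPointFree (hfree a ha) w
  have prod_subgroups := prod_subgroupsOfCard_mul hA (· • w)
  rw [Finset.prod_eq_one fun B hB ↦ prod_subgroup B (mem_subgroupsOfCard.1 hB ▸ hp), one_mul,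
    prod_univ, mul_one, one_smul, card_subgroupsOfCard hcard hA, pow_succ] at prod_subgroups
  exact right_eq_mul.1 prod_subgroups

theorem subsingleton_of_fixedPointFree [Finite W] (hcard : Nat.card A = p ^ 2)
    (hA : ∀ a : A, a ^ p = 1) (hfree : ∀ a : A, a ≠ 1 → ∀ w : W, a • w = w → w = 1) :
    Subsingleton W := by
  have hp : p.Prime := Fact.out
  have := Finite.one_lt_card_iff_nontrivial.1 (hcard ▸ Nat.one_lt_pow two_ne_zero hp.one_lt)
  obtain ⟨a, ha⟩ := exists_ne (1 : A)
  have hW : (Nat.card W).Coprime p := ((Nat.Prime.coprime_iff_not_dvd hp).2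
    (not_dvd_card_of_fixedPointFree (.of_card hcard) (hfree a ha))).symm
  refine ⟨fun v w ↦ (powCoprime hW).injective ?_⟩
  simp only [powCoprime_apply, pow_eq_one_of_fixedPointFree hcard hA hfree]

end FixedPointFree

section Quotient

variable {A X : Type*} [Group X]

/-- The action induced on `X ⧸ M` by an action on `X` leaving `M` invariant. -/
abbrev quotientMulDistribMulAction [Monoid A] [MulDistribMulAction A X]
    (M : Subgroup X) [M.Normal] [MulAction.QuotientAction A M] :
    MulDistribMulAction A (X ⧸ M) where
  smul_mul a := by
    rintro ⟨x⟩ ⟨y⟩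
    exact congrArg _ (smul_mul' a x y)
  smul_one a := congrArg _ (smul_one a)

open scoped IsMulCommutative in
theorem eq_top_of_commutator_le_of_fixedPointFree [Group A] [Finite A] [Finite X]
    [MulDistribMulAction A X] {p : ℕ} [Fact p.Prime] {M : Subgroup X}
    (hcard : Nat.card A = p ^ 2) (hA : ∀ a : A, a ^ p = 1) (hM : commutator X ≤ M)
    (hAM : ∀ a : A, ∀ x ∈ M, a • x ∈ M)
    (hfree : ∀ a : A, a ≠ 1 → ∀ x : X, x⁻¹ * a • x ∈ M → x ∈ M) : M = ⊤ := by
  have : M.Normal := .of_commutator_le _ hM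
  have : IsMulCommutative (X ⧸ M) :=
    Subgroup.Normal.quotient_commutative_iff_commutator_le.2 hM
  have : MulAction.QuotientAction A M := ⟨fun a x y hxy ↦ by
    rw [← smul_inv', ← smul_mul']
    exact hAM a _ hxy⟩
  let := quotientMulDistribMulAction (A := A) M
  have : Subsingleton (X ⧸ M) := by
    refine subsingleton_of_fixedPointFree hcard hA fun a ha w haw ↦ ?_
    induction w using QuotientGroup.induction_on with | H x =>
    exact (QuotientGroup.eq_one_iff x).2 (hfree a ha x (QuotientGroup.eq.1 haw.symm))
  exact QuotientGroup.subgroup_eq_top_of_subsingleton M this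

end Quotient

section SolvableInvariant

theorem normalizer_le_normalizer_commutator {G : Type*} [Group G] (K : Subgroup G) :
    Subgroup.normalizer (K : Set G) ≤ Subgroup.normalizer (⁅K, K⁆ : Subgroup G) := by
  intro g hg
  rw [Subgroup.mem_normalizer_iff_map_conj_eq] at hg ⊢
  rw [Subgroup.map_commutator, hg]

theorem commutator_lt_of_isSolvable {G : Type*} [Group G] {K : Subgroup G} [Group.IsSolvable K]
    (hK : K ≠ ⊥) : ⁅K, K⁆ < K := by
  have := K.nontrivial_iff_ne_bot.2 hK
  rw [← Subgroup.map_subtype_commutator]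
  conv_rhs => rw [← K.range_subtype, MonoidHom.range_eq_map]
  exact Subgroup.map_subtype_lt_map_subtype.2
    (Group.IsSolvable.commutator_lt_top_of_nontrivial K)

open Pointwise in
theorem exists_sylow_smul_eq {A N : Type*} [Group A] [Group N] [Finite N] [MulDistribMulAction A N]
    {p : ℕ} [Fact p.Prime] (hA : IsPGroup p A) (hN : ¬ p ∣ Nat.card N) (q : ℕ) [Fact q.Prime] :
    ∃ P : Sylow q N, ∀ a : A, a • P = P :=
  hA.nonempty_fixed_point_of_prime_not_dvd_card (Sylow q N) fun h ↦
    hN (h.trans ((default : Sylow q N).card_dvd_index.trans (Subgroup.index_dvd_card _)))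

open Pointwise in
theorem mem_normalizer_map_subtype_of_smul_eq {G : Type*} [Group G] {K : Subgroup G}
    {g : Subgroup.normalizer (K : Set G)} {P : Subgroup K} (h : g • P = P) :
    (g : G) ∈ Subgroup.normalizer (P.map K.subtype : Set G) := by
  rw [Subgroup.mem_normalizer_iff_map_conj_eq]
  calc (P.map K.subtype).map (MulAut.conj (g : G))
      = P.map ((MulAut.conj (g : G)).toMonoidHom.comp K.subtype) := Subgroup.map_map ..
    _ = (g • P).map K.subtype :=
        (Subgroup.map_map P K.subtype (MulDistribMulAction.toMonoidHom K g)).symm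
    _ = P.map K.subtype := by rw [h]

end SolvableInvariant

namespace IsStronglyPEmbedded

variable {G : Type*} [Group G] {p : ℕ} {H : Subgroup G}

theorem mem_of_conj_mem (hH : IsStronglyPEmbedded p H) {x g : G} (hxH : x ∈ H)
    (hx : orderOf x = p) (hgx : g * x * g⁻¹ ∈ H) : g ∈ H := by
  by_contra hg
  have hmem : g * x * g⁻¹ ∈ H ⊓ conjSub g H := ⟨hgx, x, hxH, rfl⟩
  refine hH.2.2 g hg (dvd_trans (dvd_of_eq ?_) (Subgroup.orderOf_dvd_natCard _ hmem))
  rw [← hx]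
  exact (orderOf_injective (MulAut.conj g).toMonoidHom (MulAut.conj g).injective x).symm

variable [Finite G] [Fact p.Prime] {A K : Subgroup G}

theorem le_of_commutator_le (hH : IsStronglyPEmbedded p H) (hAH : A ≤ H)
    (hcard : Nat.card A = p ^ 2) (hA : ∀ a ∈ A, a ^ p = 1)
    (hAK : A ≤ Subgroup.normalizer (K : Set G)) (hK : ⁅K, K⁆ ≤ H) : K ≤ H := by
  let := MulDistribMulAction.compHom K (Subgroup.inclusion hAK)
  have smul_coe (a : A) (z : K) : ((a • z : K) : G) = a * z * (a : G)⁻¹ := rfl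
  have hM : commutator K ≤ H.subgroupOf K := by
    rwa [← Subgroup.map_subtype_commutator, Subgroup.map_le_iff_le_comap] at hK
  rw [← Subgroup.subgroupOf_eq_top]
  refine eq_top_of_commutator_le_of_fixedPointFree hcard (fun a ↦ Subtype.ext (hA a a.2)) hM
    (fun a z hz ↦ ?_) fun a ha z hz ↦ ?_
  · exact H.mul_mem (H.mul_mem (hAH a.2) hz) (H.inv_mem (hAH a.2))
  · have hza : (z : G)⁻¹ * a * z ∈ H := by
      simpa [smul_coe, mul_assoc] using H.mul_mem hz (hAH a.2)
    rw [Subgroup.mem_subgroupOf, ← H.inv_mem_iff]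
    exact hH.mem_of_conj_mem (hAH a.2) (orderOf_eq_prime (hA a a.2) (by simpa using ha))
      (by rwa [inv_inv])

theorem le_of_isSolvable (hH : IsStronglyPEmbedded p H) (hAH : A ≤ H)
    (hcard : Nat.card A = p ^ 2) (hA : ∀ a ∈ A, a ^ p = 1)
    (hAK : A ≤ Subgroup.normalizer (K : Set G)) (hK : Group.IsSolvable K) : K ≤ H := by
  induction K using WellFoundedLT.induction with | ind K ih =>
  obtain rfl | hbot := eq_or_ne K ⊥
  · exact bot_le
  have hlt : ⁅K, K⁆ < K := commutator_lt_of_isSolvable hbot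
  refine hH.le_of_commutator_le hAH hcard hA hAK
    (ih _ hlt (hAK.trans (normalizer_le_normalizer_commutator K)) ?_)
  exact Group.isSolvable_of_isSolvable_injective (Subgroup.inclusion_injective hlt.le)

theorem le_of_not_dvd_card (hH : IsStronglyPEmbedded p H) (hAH : A ≤ H)
    (hcard : Nat.card A = p ^ 2) (hA : ∀ a ∈ A, a ^ p = 1)
    (hAK : A ≤ Subgroup.normalizer (K : Set G)) (hK : ¬ p ∣ Nat.card K) : K ≤ H := by
  rw [← Subgroup.relIndex_eq_one]
  by_contra hindex
  obtain ⟨q, hq, hdvd⟩ := Nat.exists_prime_and_dvd hindex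
  have := Fact.mk hq
  let := MulDistribMulAction.compHom K (Subgroup.inclusion hAK)
  obtain ⟨P, hP⟩ := exists_sylow_smul_eq (.of_card hcard : IsPGroup p A) hK q
  have hPH : P.map K.subtype ≤ H := by
    refine hH.le_of_isSolvable hAH hcard hA (fun a ha ↦ ?_) ?_
    · exact mem_normalizer_map_subtype_of_smul_eq (g := ⟨a, hAK ha⟩)
        (congrArg Sylow.toSubgroup (hP ⟨a, ha⟩))
    · have := (P.2.map K.subtype).isNilpotent
      exact inferInstanceAs (Group.IsSolvable (P.map K.subtype : Subgroup G))
  rw [Subgroup.map_le_iff_le_comap] at hPH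
  exact P.not_dvd_index (hdvd.trans (Subgroup.index_dvd_of_le hPH))

theorem dvd_card_subgroupOf (hH : IsStronglyPEmbedded p H) (N : Subgroup G) [N.Normal]
    (hN : p ∣ Nat.card N) : p ∣ Nat.card (H.subgroupOf N) := by
  obtain ⟨x, hx⟩ := exists_prime_orderOf_dvd_card' p hH.2.1
  have hx' : orderOf (x : G) = p := (Subgroup.orderOf_coe x).trans hx
  have hxN : Subgroup.zpowers (x : G) ≤ Subgroup.normalizer (N : Set G) :=
    le_top.trans N.normalizer_eq_top.ge
  let := MulDistribMulAction.compHom N (Subgroup.inclusion hxN)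
  have hP : IsPGroup p (Subgroup.zpowers (x : G)) :=
    .of_card (n := 1) (by rw [Nat.card_zpowers, hx', pow_one])
  have hfixed : FixedPoints.subgroup (Subgroup.zpowers (x : G)) N ≤ H.subgroupOf N := by
    intro n hn
    have hxn : (x : G) * n * (x : G)⁻¹ = n :=
      congrArg Subtype.val (hn ⟨x, Subgroup.mem_zpowers (x : G)⟩)
    refine hH.mem_of_conj_mem x.2 hx' ?_
    have hnx : (n : G) * x * (n : G)⁻¹ = x :=
      mul_inv_eq_iff_eq_mul.2 (mul_inv_eq_iff_eq_mul.1 hxn).symm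
    exact hnx.symm ▸ x.2
  exact ((hP.card_modEq_card_fixedPoints N).dvd_iff dvd_rfl |>.1 hN).trans
    (Subgroup.card_dvd_of_le hfixed)

theorem subgroupOf (hH : IsStronglyPEmbedded p H) (N : Subgroup G) [N.Normal]
    (hN : p ∣ Nat.card N) (hNH : ¬ N ≤ H) : IsStronglyPEmbedded p (H.subgroupOf N) := by
  refine ⟨mt Subgroup.subgroupOf_eq_top.1 hNH, hH.dvd_card_subgroupOf N hN, fun g hg hdvd ↦ ?_⟩
  refine hH.2.2 g hg (hdvd.trans ?_)
  rw [← Subgroup.card_subtype]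
  refine Subgroup.card_dvd_of_le ?_
  rintro _ ⟨m, ⟨hm, n, hn, rfl⟩, rfl⟩
  exact ⟨hm, n, hn, rfl⟩

theorem not_le (hH : IsStronglyPEmbedded p H) (N : Subgroup G) [hN : N.Normal]
    (hdvd : p ∣ Nat.card N) : ¬ N ≤ H := by
  intro hNH
  obtain ⟨x, hx⟩ := exists_prime_orderOf_dvd_card' p hdvd
  exact hH.1 (top_unique fun g _ ↦ hH.mem_of_conj_mem (hNH x.2)
    ((Subgroup.orderOf_coe x).trans hx) (hNH (hN.conj_mem x x.2 g)))

theorem le_of_le_centralizer (hH : IsStronglyPEmbedded p H) {N : Subgroup G} [N.Normal]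
    (hN : p ∣ Nat.card N) (hK : K ≤ Subgroup.centralizer N) : K ≤ H := by
  obtain ⟨x, hx⟩ := exists_prime_orderOf_dvd_card' p (hH.dvd_card_subgroupOf N hN)
  have hx' : orderOf (x : G) = p := by simpa using hx
  intro k hk
  have hkx : k * (x : G) * k⁻¹ = x := mul_inv_eq_iff_eq_mul.2 (hK hk x x.1.2).symm
  exact hH.mem_of_conj_mem x.2 hx' (hkx.symm ▸ x.2)

end IsStronglyPEmbedded

section PPrimeCore

theorem card_sup_dvd_card_mul_card {G : Type*} [Group G] (M N : Subgroup G) [N.Normal] :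
    Nat.card ↥(M ⊔ N) ∣ Nat.card M * Nat.card N := by
  calc Nat.card ↥(M ⊔ N)
      = Nat.card N * N.relIndex (M ⊔ N) := by
        simp only [← Subgroup.relIndex_bot_left]
        exact (Subgroup.relIndex_mul_relIndex ⊥ N _ bot_le le_sup_right).symm
    _ = N.relIndex M * Nat.card N := by rw [Subgroup.relIndex_sup_right, mul_comm]
    _ ∣ Nat.card M * Nat.card N := Nat.mul_dvd_mul_right (N.relIndex_dvd_card M) _

variable {G : Type*} [Group G] {p : ℕ}

theorem le_pPrimeCore {N : Subgroup G} [hN : N.Normal] (hdvd : ¬ p ∣ Nat.card N) :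
    N ≤ pPrimeCore p G :=
  le_sSup ⟨hN, hdvd⟩

theorem dvd_card_of_pPrimeCore_eq_bot (hcore : pPrimeCore p G = ⊥) {N : Subgroup G}
    [N.Normal] (hN : N ≠ ⊥) : p ∣ Nat.card N := by
  by_contra hdvd
  exact hN (le_bot_iff.1 (hcore ▸ le_pPrimeCore hdvd))

instance normal_pPrimeCore : (pPrimeCore p G).Normal :=
  Subgroup.sSup_normal _ fun _ hN ↦ hN.1

variable [Finite G] [Fact p.Prime]

theorem not_dvd_card_pPrimeCore : ¬ p ∣ Nat.card (pPrimeCore p G) := by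
  have hsup : SupClosed {N : Subgroup G | N.Normal ∧ ¬ p ∣ Nat.card N} := by
    rintro M ⟨hM, hpM⟩ N ⟨hN, hpN⟩
    exact ⟨Subgroup.sup_normal M N, fun h ↦ ((Fact.out : p.Prime).dvd_mul.1
      (h.trans (card_sup_dvd_card_mul_card M N))).elim hpM hpN⟩
  have hbot : ¬ p ∣ Nat.card (⊥ : Subgroup G) :=
    Subgroup.card_bot (G := G) ▸ (Fact.out : p.Prime).not_dvd_one
  have hmem : pPrimeCore p G ∈ {N : Subgroup G | N.Normal ∧ ¬ p ∣ Nat.card N} :=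
    hsup.sSup_mem_of_nonempty (Set.toFinite _) ⟨⊥, Subgroup.normal_bot, hbot⟩ subset_rfl
  exact hmem.2

instance characteristic_pPrimeCore : (pPrimeCore p G).Characteristic := by
  refine Subgroup.characteristic_iff_map_le.2 fun φ ↦ ?_
  have : ((pPrimeCore p G).map φ.toMonoidHom).Normal := normal_pPrimeCore.map _ φ.surjective
  refine le_pPrimeCore ?_
  rw [Subgroup.card_map_of_injective φ.injective]
  exact not_dvd_card_pPrimeCore

theorem pPrimeCore_eq_bot_of_normal (hcore : pPrimeCore p G = ⊥) (N : Subgroup G) [N.Normal] :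
    pPrimeCore p N = ⊥ := by
  have hle : (pPrimeCore p N).map N.subtype ≤ pPrimeCore p G := by
    refine le_pPrimeCore ?_
    rw [Subgroup.card_subtype]
    exact not_dvd_card_pPrimeCore
  rwa [hcore, le_bot_iff, Subgroup.map_eq_bot_iff_of_injective _ N.subtype_injective] at hle

theorem IsStronglyPEmbedded.pPrimeCore_eq_bot {H : Subgroup G} (hH : IsStronglyPEmbedded p H)
    (hrank : HasElemAbelianRankTwo p H) (hcore : pPrimeCore p H = ⊥) : pPrimeCore p G = ⊥ := by
  obtain ⟨A, hAH, hcard, hA⟩ := hrank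
  have hle : pPrimeCore p G ≤ H :=
    hH.le_of_not_dvd_card hAH hcard hA
      (le_top.trans (pPrimeCore p G).normalizer_eq_top.ge) not_dvd_card_pPrimeCore
  by_contra hne
  refine not_dvd_card_pPrimeCore (p := p) (G := G) ?_
  rw [← Nat.card_congr (Subgroup.subgroupOfEquivOfLe hle).toEquiv]
  refine dvd_card_of_pPrimeCore_eq_bot hcore ?_
  rwa [Ne, Subgroup.subgroupOf_eq_bot, disjoint_of_le_iff_left_eq_bot hle]

namespace IsStronglyPEmbedded

variable {H N : Subgroup G} [N.Normal]

theorem centralizer_eq_bot (hH : IsStronglyPEmbedded p H) (hcore : pPrimeCore p G = ⊥)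
    (hN : N ≠ ⊥) : Subgroup.centralizer (N : Set G) = ⊥ := by
  by_contra hC
  exact hH.not_le N (dvd_card_of_pPrimeCore_eq_bot hcore hN)
    (hH.le_of_le_centralizer (dvd_card_of_pPrimeCore_eq_bot hcore hC)
      (Subgroup.le_centralizer_iff.1 le_rfl))

theorem not_disjoint (hH : IsStronglyPEmbedded p H) (hcore : pPrimeCore p G = ⊥)
    (hN : N ≠ ⊥) {M : Subgroup G} [M.Normal] (hM : M ≠ ⊥) : ¬ Disjoint M N := by
  intro hdisj
  have hle := Subgroup.commutator_eq_bot_iff_le_centralizer.1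
    (Subgroup.commutator_eq_bot_of_disjoint hdisj)
  exact hM (le_bot_iff.1 (hH.centralizer_eq_bot hcore hN ▸ hle))

end IsStronglyPEmbedded

end PPrimeCore

section Monolith

variable (G : Type*) [Group G]

/-- The intersection of all nontrivial normal subgroups of `G`; it is the unique minimal normal
subgroup as soon as it is nontrivial. -/
def monolith : Subgroup G :=
  sInf {N : Subgroup G | N.Normal ∧ N ≠ ⊥}

variable {G}

theorem monolith_le {N : Subgroup G} [hN : N.Normal] (hne : N ≠ ⊥) : monolith G ≤ N :=
  sInf_le ⟨hN, hne⟩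

instance characteristic_monolith : (monolith G).Characteristic := by
  refine Subgroup.characteristic_iff_map_le.2 fun φ ↦ le_sInf fun N hN ↦ ?_
  have := hN.1
  refine Subgroup.map_le_iff_le_comap.2 (monolith_le fun hbot ↦ hN.2 ?_)
  rw [← Subgroup.map_comap_eq_self_of_surjective (f := φ.toMonoidHom) φ.surjective N, hbot,
    Subgroup.map_bot]

theorem monolith_ne_bot_of_not_disjoint [Finite G] [Nontrivial G]
    (h : ∀ M N : Subgroup G, M.Normal → N.Normal → M ≠ ⊥ → N ≠ ⊥ → ¬ Disjoint M N) :
    monolith G ≠ ⊥ := by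
  have hinf : InfClosed {N : Subgroup G | N.Normal ∧ N ≠ ⊥} := by
    rintro M ⟨hM, hM'⟩ N ⟨hN, hN'⟩
    exact ⟨Subgroup.normal_inf_normal M N, fun hbot ↦ h M N hM hN hM' hN' (disjoint_iff.2 hbot)⟩
  have hmem : monolith G ∈ {N : Subgroup G | N.Normal ∧ N ≠ ⊥} :=
    hinf.sInf_mem_of_nonempty (Set.toFinite _) ⟨⊤, Subgroup.normal_top, top_ne_bot⟩ subset_rfl
  exact hmem.2

theorem isSimpleGroup_monolith (hG : monolith G ≠ ⊥) (hN : monolith (monolith G) ≠ ⊥) :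
    IsSimpleGroup (monolith G) := by
  have hle : monolith G ≤ (monolith (monolith G)).map (monolith G).subtype :=
    monolith_le ((Subgroup.map_eq_bot_iff_of_injective _ (Subgroup.subtype_injective _)).not.2 hN)
  have htop : monolith (monolith G) = ⊤ := by
    rw [← Subgroup.comap_map_eq_self_of_injective (monolith G).subtype_injective
      (monolith (monolith G))]
    exact Subgroup.subgroupOf_eq_top.2 hle
  have := (Subgroup.nontrivial_iff_ne_bot _).2 hG
  refine ⟨fun M hM ↦ or_iff_not_imp_left.2 fun hne ↦ ?_⟩
  exact top_unique (htop ▸ monolith_le hne)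

end Monolith

section GeneralizedFitting

variable {G : Type*} [Group G]

namespace IsQuasisimple

theorem le_center_or_eq_top {L : Subgroup G} (hL : IsQuasisimple L) (M : Subgroup L)
    [hM : M.Normal] : M ≤ Subgroup.center L ∨ M = ⊤ := by
  obtain ⟨hperfect, hsimple⟩ := hL
  have hmap := hM.map (QuotientGroup.mk' (Subgroup.center L)) (QuotientGroup.mk'_surjective _)
  refine hmap.eq_bot_or_eq_top.imp (fun hbot ↦ ?_) fun htop ↦ ?_
  · rwa [Subgroup.map_eq_bot_iff, QuotientGroup.ker_mk'] at hbot
  · have hsup : M ⊔ Subgroup.center L = ⊤ := by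
      rw [← QuotientGroup.ker_mk' (Subgroup.center L), ← Subgroup.comap_map_eq, htop,
        Subgroup.comap_top]
    exact top_unique (hperfect ▸
      Subgroup.Normal.commutator_le_of_self_sup_commutative_eq_top hsup inferInstance)

theorem of_isSimpleGroup (L : Subgroup G) [IsSimpleGroup L] (hL : ¬ Group.IsSolvable L) :
    IsQuasisimple L := by
  have hcenter : Subgroup.center L = ⊥ := by
    refine (inferInstance : (Subgroup.center L).Normal).eq_bot_or_eq_top.resolve_right fun htop ↦ ?_
    exact hL (IsSimpleGroup.comm_iff_isSolvable.1 fun a b ↦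
      Subgroup.mem_center_iff.1 (htop ▸ Subgroup.mem_top b) a)
  refine ⟨(inferInstance : (commutator L).Normal).eq_bot_or_eq_top.resolve_left fun hbot ↦ ?_, ?_⟩
  · exact top_ne_bot (((commutator_eq_bot_iff_center_eq_top L).1 hbot).symm.trans hcenter)
  · exact ((QuotientGroup.quotientMulEquivOfEq hcenter).trans
      QuotientGroup.quotientBot).isSimpleGroup

end IsQuasisimple

theorem not_isSolvable_of_centralizer_eq_bot {N : Subgroup G} [IsSimpleGroup N]
    (hC : Subgroup.centralizer (N : Set G) = ⊥) : ¬ Group.IsSolvable N := by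
  intro hN
  refine N.nontrivial_iff_ne_bot.1 inferInstance (le_bot_iff.1 (hC ▸ fun b hb a ha ↦ ?_))
  exact congrArg Subtype.val (IsSimpleGroup.comm_iff_isSolvable.2 hN ⟨a, ha⟩ ⟨b, hb⟩)

theorem isSubnormal_of_normal (N : Subgroup G) [hN : N.Normal] : IsSubnormal N :=
  .single ⟨le_top, fun b _ a ha ↦ hN.conj_mem a ha b⟩

variable {N : Subgroup G} [N.Normal] [IsSimpleGroup N]

theorem IsSubnormal.eq_bot_or_le {K : Subgroup G} (hK : IsSubnormal K)
    (hC : Subgroup.centralizer (N : Set G) = ⊥) : K = ⊥ ∨ N ≤ K := by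
  induction hK using Relation.ReflTransGen.head_induction_on with
  | refl => exact .inr le_top
  | @head K L hKL _ ih =>
    obtain ⟨hKL, hconj⟩ := hKL
    obtain rfl | hNL := ih
    · exact .inl (le_bot_iff.1 hKL)
    have hNK : N ≤ Subgroup.normalizer (K : Set G) :=
      Subgroup.le_normalizer_iff.2 fun n hn ↦ hconj n (hNL hn)
    have : (K.subgroupOf N).Normal := Subgroup.normal_subgroupOf_of_le_normalizer hNK
    refine this.eq_bot_or_eq_top.imp (fun hbot ↦ ?_) Subgroup.subgroupOf_eq_top.1
    rw [← le_bot_iff, ← hC, ← Subgroup.commutator_eq_bot_iff_le_centralizer, ← le_bot_iff,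
      ← (Subgroup.subgroupOf_eq_bot.1 hbot).eq_bot]
    exact le_inf (Subgroup.le_normalizer_iff_commutator_le_left.1 hNK)
      (Subgroup.commutator_le_right K N)

theorem IsComponent.le {L : Subgroup G} (hL : IsComponent L)
    (hC : Subgroup.centralizer (N : Set G) = ⊥) : L ≤ N := by
  obtain rfl | hNL := hL.1.eq_bot_or_le hC
  · exact bot_le
  refine Subgroup.subgroupOf_eq_top.1 ((hL.2.le_center_or_eq_top _).resolve_left fun hcenter ↦ ?_)
  refine not_isSolvable_of_centralizer_eq_bot hC
    (IsSimpleGroup.comm_iff_isSolvable.1 fun a b ↦ Subtype.ext ?_)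
  have ha : (⟨a, hNL a.2⟩ : L) ∈ Subgroup.center L := hcenter a.2
  exact congrArg L.subtype (Subgroup.mem_center_iff.1 ha ⟨b, hNL b.2⟩).symm

theorem genFitting_eq_of_centralizer_eq_bot (hC : Subgroup.centralizer (N : Set G) = ⊥) :
    genFitting G = N := by
  have hN := not_isSolvable_of_centralizer_eq_bot hC
  refine le_antisymm (sup_le (sSup_le ?_) (sSup_le fun L hL ↦ hL.le hC)) ?_
  · rintro M ⟨hM, hMnilpotent⟩
    obtain rfl | hNM := (isSubnormal_of_normal M).eq_bot_or_le hC
    · exact bot_le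
    · exact absurd (Group.isSolvable_of_isSolvable_injective (Subgroup.inclusion_injective hNM)) hN
  · exact le_sup_of_le_right (le_sSup ⟨isSubnormal_of_normal N, .of_isSimpleGroup N hN⟩)

end GeneralizedFitting

theorem IsStronglyPEmbedded.monolith_ne_bot {G : Type*} [Group G] [Finite G] {p : ℕ}
    [Fact p.Prime] {H : Subgroup G} (hH : IsStronglyPEmbedded p H) (hcore : pPrimeCore p G = ⊥) :
    monolith G ≠ ⊥ := by
  have : Nontrivial G := (Subgroup.nontrivial_iff (G := G)).1 ⟨H, ⊤, hH.1⟩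
  exact monolith_ne_bot_of_not_disjoint fun M N hM hN hM' hN' ↦ hH.not_disjoint hcore hN' hM'

theorem genFitting_simple_of_rank_two {G : Type*} [Group G] [Finite G]
    (p : ℕ) (hp : p.Prime) (H : Subgroup G) (hH : IsStronglyPEmbedded p H)
    (hrank : HasElemAbelianRankTwo p H) (hcore : pPrimeCore p ↥H = ⊥) :
    IsSimpleGroup ↥(genFitting G) ∧ ∃ a b : ↥(genFitting G), a * b ≠ b * a := by
  have := Fact.mk hp
  have hcoreG : pPrimeCore p G = ⊥ := hH.pPrimeCore_eq_bot hrank hcore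
  have hne : monolith G ≠ ⊥ := hH.monolith_ne_bot hcoreG
  have hdvd : p ∣ Nat.card (monolith G) := dvd_card_of_pPrimeCore_eq_bot hcoreG hne
  have hembedded : IsStronglyPEmbedded p (H.subgroupOf (monolith G)) :=
    hH.subgroupOf _ hdvd (hH.not_le _ hdvd)
  have hsimple : IsSimpleGroup (monolith G) := isSimpleGroup_monolith hne
    (hembedded.monolith_ne_bot (pPrimeCore_eq_bot_of_normal hcoreG _))
  have hcentralizer : Subgroup.centralizer (monolith G : Set G) = ⊥ :=
    hH.centralizer_eq_bot hcoreG hne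
  rw [genFitting_eq_of_centralizer_eq_bot hcentralizer]
  refine ⟨hsimple, ?_⟩
  simpa only [not_forall] using
    mt IsSimpleGroup.comm_iff_isSolvable.1 (not_isSolvable_of_centralizer_eq_bot hcentralizer)
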